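/- arXiv:1810.01390 — 3 statements merged into one kernel-verified Lean document; each statement's English description precedes it below -/
import Mathlib

section
/- Let I be an open interval with 0 ∈ I, let a ∈ ℝ, b > 0 and q > 1, and set γ = (bq)^{−1/(q−1)} and f(r) = a − r + b r^q for r ≥ 0. Let G : I → ℝ be a nonnegative continuous function such that f(G(t)) ≥ 0 for all t ∈ I, and assume a < (1 − 1/q)γ. If G(0) < γ, then G(t) < γ for all t ∈ I. -/
open MeasureTheory Real
open scoped RealInnerProductSpace

noncomputable section

abbrev Rn (n : ℕ) := EuclideanSpace ℝ (Fin n)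

/-- Membership in `H¹(ℝⁿ)` for a real-valued function: the function and its
gradient are in `L²`. -/
def MemH1 {n : ℕ} (u : Rn n → ℝ) : Prop :=
  MemLp u 2 volume ∧ MemLp (gradient u) 2 volume

/-- The charge `Q(u,v) = ∫ (u² + 2v²)`. -/
def Qf {n : ℕ} (u v : Rn n → ℝ) : ℝ := ∫ x : Rn n, (u x ^ 2 + 2 * v x ^ 2)

/-- `K(u,v) = ∫ (|∇u|² + κ|∇v|²)`. -/
def Kf {n : ℕ} (κ : ℝ) (u v : Rn n → ℝ) : ℝ :=
  ∫ x : Rn n, (‖gradient u x‖ ^ 2 + κ * ‖gradient v x‖ ^ 2)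

/-- `P(u,v) = ∫ u² v`. -/
def Pf {n : ℕ} (u v : Rn n → ℝ) : ℝ := ∫ x : Rn n, u x ^ 2 * v x

/-- The action functional `I_ω = ½K + (ω/2)Q − P`. -/
def If {n : ℕ} (κ ω : ℝ) (u v : Rn n → ℝ) : ℝ :=
  (1 / 2) * Kf κ u v + (ω / 2) * Qf u v - Pf u v

/-- A test function: smooth and compactly supported. -/
def IsTest {n : ℕ} (f : Rn n → ℝ) : Prop := ContDiff ℝ (⊤ : ℕ∞) f ∧ HasCompactSupport f

/-- Weak solution of `−Δφ + ωφ = 2φψ`, `−κΔψ + 2ωψ = φ²`. -/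
def IsWeakSolution {n : ℕ} (κ ω : ℝ) (φ ψ : Rn n → ℝ) : Prop :=
  MemH1 φ ∧ MemH1 ψ ∧
  (∀ f : Rn n → ℝ, IsTest f →
    ∫ x : Rn n, (⟪gradient φ x, gradient f x⟫ + ω * φ x * f x)
      = 2 * ∫ x : Rn n, φ x * ψ x * f x) ∧
  (∀ g : Rn n → ℝ, IsTest g →
    ∫ x : Rn n, (κ * ⟪gradient ψ x, gradient g x⟫ + 2 * ω * ψ x * g x)
      = ∫ x : Rn n, φ x ^ 2 * g x)

/-- The pair `(φ,ψ)` is nontrivial. -/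
def NontrivialPair {n : ℕ} (φ ψ : Rn n → ℝ) : Prop := ¬(φ = 0 ∧ ψ = 0)

/-- A ground state: a nontrivial weak solution minimizing `I_ω` among all
nontrivial weak solutions. -/
def IsGroundState {n : ℕ} (κ ω : ℝ) (φ ψ : Rn n → ℝ) : Prop :=
  IsWeakSolution κ ω φ ψ ∧ NontrivialPair φ ψ ∧
  ∀ φ' ψ' : Rn n → ℝ, IsWeakSolution κ ω φ' ψ' → NontrivialPair φ' ψ' →
    If κ ω φ ψ ≤ If κ ω φ' ψ'

/-- The Weinstein functional `J = Q^{3/2−n/4} K^{n/4} / P`. -/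
def Jf {n : ℕ} (κ : ℝ) (u v : Rn n → ℝ) : ℝ :=
  Qf u v ^ ((3 : ℝ) / 2 - (n : ℝ) / 4) * Kf κ u v ^ ((n : ℝ) / 4) / Pf u v

/-- The set `𝒫` of admissible pairs. -/
def PPos (n : ℕ) : Set ((Rn n → ℝ) × (Rn n → ℝ)) :=
  {p | MemH1 p.1 ∧ MemH1 p.2 ∧ NontrivialPair p.1 p.2 ∧ 0 < Pf p.1 p.2}

/-- `α₁ = inf_{𝒫} J`. -/
def alpha1 (n : ℕ) (κ : ℝ) : ℝ :=
  sInf ((fun p => Jf κ p.1 p.2) '' PPos n)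

/-- Radial symmetry. -/
def Radial {n : ℕ} (u : Rn n → ℝ) : Prop := ∀ x y : Rn n, ‖x‖ = ‖y‖ → u x = u y

/-- The rescaling `(t, l) • u = t · u(·/l)`. -/
def rescale {n : ℕ} (t l : ℝ) (u : Rn n → ℝ) : Rn n → ℝ := fun x => t * u (l⁻¹ • x)

/-- The energy of a real pair: `E = K − 2P`. -/
def Ef {n : ℕ} (κ : ℝ) (u v : Rn n → ℝ) : ℝ := Kf κ u v - 2 * Pf u v

/-! Complex-valued functionals. -/

/-- Partial derivative in the `i`-th coordinate direction. -/
def pderiv' {n : ℕ} (i : Fin n) (u : Rn n → ℂ) (x : Rn n) : ℂ :=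
  fderiv ℝ u x (EuclideanSpace.single i 1)

/-- `|∇u|² = ∑ᵢ |∂ᵢu|²` for a complex-valued `u`. -/
def gradSqC {n : ℕ} (u : Rn n → ℂ) (x : Rn n) : ℝ := ∑ i, ‖pderiv' i u x‖ ^ 2

/-- Membership in `H¹(ℝⁿ)` for a complex-valued function. -/
def MemH1C {n : ℕ} (u : Rn n → ℂ) : Prop :=
  MemLp u 2 volume ∧ MemLp (fun x => fderiv ℝ u x) 2 volume

/-- The charge of a complex pair. -/
def QC {n : ℕ} (u v : Rn n → ℂ) : ℝ := ∫ x : Rn n, (‖u x‖ ^ 2 + 2 * ‖v x‖ ^ 2)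

/-- `K` for a complex pair. -/
def KC {n : ℕ} (κ : ℝ) (u v : Rn n → ℂ) : ℝ :=
  ∫ x : Rn n, (gradSqC u x + κ * gradSqC v x)

/-- The energy `E(u,v) = K(u,v) − 2 Re ∫ v̄ u²`. -/
def EC {n : ℕ} (κ : ℝ) (u v : Rn n → ℂ) : ℝ :=
  KC κ u v - 2 * (∫ x : Rn n, (starRingEnd ℂ) (v x) * u x ^ 2).re

/-!
Since `b γ ^ q = γ / q`, we have `f γ = a - (1 - 1 / q) γ < 0`, so `f ∘ G ≥ 0` prevents `G` from
taking the value `γ`. A continuous function on a connected set that avoids `γ` and is somewhere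
below it stays below it.
-/

/-- The paper's `γ = (bq)^{-1/(q-1)}`, the critical point of `r ↦ a - r + b r ^ q` on `(0, ∞)`,
which is the barrier that `G` cannot cross. It has this meaning for `0 < b * q` and `q ≠ 1`;
otherwise it takes whatever value the conventions for real powers and division give. -/
def critPoint (b q : ℝ) : ℝ := (b * q) ^ (-(1 / (q - 1)))

section CritPoint

variable {b q : ℝ}

theorem critPoint_pos (hbq : 0 < b * q) : 0 < critPoint b q :=
  rpow_pos_of_pos hbq _

theorem critPoint_rpow_sub_one (hbq : 0 < b * q) (hq : q ≠ 1) :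
    critPoint b q ^ (q - 1) = (b * q)⁻¹ := by
  have hq' : q - 1 ≠ 0 := sub_ne_zero.mpr hq
  rw [critPoint, ← rpow_mul hbq.le, neg_mul, one_div_mul_cancel hq', rpow_neg_one]

theorem mul_critPoint_rpow (hbq : 0 < b * q) (hq : q ≠ 1) :
    b * critPoint b q ^ q = 1 / q * critPoint b q := by
  obtain ⟨hb, hq₀⟩ : b ≠ 0 ∧ q ≠ 0 := mul_ne_zero_iff.mp hbq.ne'
  calc b * critPoint b q ^ q
      = b * (critPoint b q ^ (q - 1) * critPoint b q) := by
        rw [← rpow_add_one (critPoint_pos hbq).ne', sub_add_cancel]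
    _ = b * ((b * q)⁻¹ * critPoint b q) := by rw [critPoint_rpow_sub_one hbq hq]
    _ = 1 / q * critPoint b q := by field_simp

theorem sub_critPoint_add_mul_rpow (a : ℝ) (hbq : 0 < b * q) (hq : q ≠ 1) :
    a - critPoint b q + b * critPoint b q ^ q = a - (1 - 1 / q) * critPoint b q := by
  rw [mul_critPoint_rpow hbq hq]
  ring

end CritPoint

theorem trapping_below_general {X : Type*} [TopologicalSpace X] {s : Set X}
    (hs : IsPreconnected s) {x₀ : X} (hx₀ : x₀ ∈ s) {a b q : ℝ} (hbq : 0 < b * q) (hq : q ≠ 1)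
    {G : X → ℝ} (hG : ContinuousOn G s)
    (hfG : ∀ x ∈ s, 0 < G x → 0 ≤ a - G x + b * G x ^ q)
    (ha : a < (1 - 1 / q) * critPoint b q) (hGx₀ : G x₀ < critPoint b q) :
    ∀ x ∈ s, G x < critPoint b q := by
  have hneg : a - critPoint b q + b * critPoint b q ^ q < 0 := by
    rw [sub_critPoint_add_mul_rpow a hbq hq]
    exact sub_neg.mpr ha
  have hne : ∀ x ∈ s, G x ≠ critPoint b q := by
    intro x hx hGx
    have hnonneg := hfG x hx (hGx ▸ critPoint_pos hbq)
    rw [hGx] at hnonneg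
    exact hneg.not_ge hnonneg
  exact fun x hx ↦ hs.gt_of_ne hG hne ⟨x₀, hx₀, hGx₀⟩ hx

/-- Continuity-trapping lemma, part (i): if `G(0) < γ` then `G(t) < γ` on `I`. -/
theorem trapping_below (I : Set ℝ) (hIopen : IsOpen I) (hIconn : I.OrdConnected)
    (h0I : (0 : ℝ) ∈ I) (a b q : ℝ) (hb : 0 < b) (hq : 1 < q)
    (G : ℝ → ℝ) (hGcont : ContinuousOn G I) (hGnn : ∀ t ∈ I, 0 ≤ G t)
    (hfG : ∀ t ∈ I, 0 ≤ a - G t + b * G t ^ q)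
    (ha : a < (1 - 1 / q) * (b * q) ^ (-(1 / (q - 1))))
    (hG0 : G 0 < (b * q) ^ (-(1 / (q - 1)))) :
    ∀ t ∈ I, G t < (b * q) ^ (-(1 / (q - 1))) :=
  trapping_below_general hIconn.isPreconnected h0I (by positivity) hq.ne' hGcont
    (fun t ht _ ↦ hfG t ht) ha hG0

end
end

section
/- Let I be an open interval with 0 ∈ I, let a ∈ ℝ, b > 0 and q > 1, and set γ = (bq)^{−1/(q−1)} and f(r) = a − r + b r^q for r ≥ 0. Let G : I → ℝ be a nonnegative continuous function such that f(G(t)) ≥ 0 for all t ∈ I, and assume a < (1 − 1/q)γ. If G(0) > γ, then G(t) > γ for all t ∈ I. -/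
open MeasureTheory Real
open scoped RealInnerProductSpace

noncomputable section

/-- The positive critical point `γ` of `r ↦ a - r + b * r ^ q`, independent of `a`. The closed form
is meaningful for `0 < b * q` and `q ≠ 1`. -/
def criticalPoint (b q : ℝ) : ℝ := (b * q) ^ (-(1 / (q - 1)))

section CriticalPoint

variable {b q : ℝ}

lemma criticalPoint_pos (hbq : 0 < b * q) : 0 < criticalPoint b q :=
  rpow_pos_of_pos hbq _

lemma mul_criticalPoint_rpow_sub_one (hbq : 0 < b * q) (hq : q ≠ 1) :
    b * q * criticalPoint b q ^ (q - 1) = 1 := by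
  have hexp : -(1 / (q - 1)) * (q - 1) = -1 := by
    rw [neg_mul, one_div_mul_cancel (sub_ne_zero.mpr hq)]
  rw [criticalPoint, ← rpow_mul hbq.le, hexp, rpow_neg_one, mul_inv_cancel₀ hbq.ne']

lemma mul_rpow_eq_one_div_mul_of_critical {r : ℝ} (hr : r ≠ 0) (hcrit : b * q * r ^ (q - 1) = 1) :
    b * r ^ q = 1 / q * r := by
  have hq : q ≠ 0 := by
    rintro rfl
    simp at hcrit
  calc b * r ^ q = b * (r ^ (q - 1) * r) := by rw [← rpow_add_one hr, sub_add_cancel]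
    _ = 1 / q * (b * q * r ^ (q - 1)) * r := by field_simp
    _ = 1 / q * r := by rw [hcrit, mul_one]

lemma sub_criticalPoint_add_mul_rpow (a : ℝ) (hbq : 0 < b * q) (hq : q ≠ 1) :
    a - criticalPoint b q + b * criticalPoint b q ^ q = a - (1 - 1 / q) * criticalPoint b q := by
  rw [mul_rpow_eq_one_div_mul_of_critical (criticalPoint_pos hbq).ne'
    (mul_criticalPoint_rpow_sub_one hbq hq)]
  ring

end CriticalPoint

theorem trapping_above_general {X : Type*} [TopologicalSpace X] {s : Set X} {x₀ : X} {a b q : ℝ}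
    {G : X → ℝ} (hs : IsPreconnected s) (hx₀ : x₀ ∈ s) (hbq : 0 < b * q) (hq : q ≠ 1)
    (hG : ContinuousOn G s) (hfG : ∀ x ∈ s, 0 ≤ a - G x + b * G x ^ q)
    (ha : a < (1 - 1 / q) * criticalPoint b q)
    (hGx₀ : criticalPoint b q < G x₀) : ∀ x ∈ s, criticalPoint b q < G x := by
  have hneg : a - criticalPoint b q + b * criticalPoint b q ^ q < 0 := by
    rw [sub_criticalPoint_add_mul_rpow a hbq hq]
    exact sub_neg.mpr ha
  have hne : ∀ x ∈ s, G x ≠ criticalPoint b q := fun x hx hGx =>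
    (hfG x hx).not_gt (hGx ▸ hneg)
  exact fun x hx => hs.lt_of_ne hG hne ⟨x₀, hx₀, hGx₀⟩ hx

/-- Continuity-trapping lemma, part (ii): if `G(0) > γ` then `G(t) > γ` on `I`. -/
theorem trapping_above (I : Set ℝ) (hIopen : IsOpen I) (hIconn : I.OrdConnected)
    (h0I : (0 : ℝ) ∈ I) (a b q : ℝ) (hb : 0 < b) (hq : 1 < q)
    (G : ℝ → ℝ) (hGcont : ContinuousOn G I) (hGnn : ∀ t ∈ I, 0 ≤ G t)
    (hfG : ∀ t ∈ I, 0 ≤ a - G t + b * G t ^ q)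
    (ha : a < (1 - 1 / q) * (b * q) ^ (-(1 / (q - 1))))
    (hG0 : G 0 > (b * q) ^ (-(1 / (q - 1)))) :
    ∀ t ∈ I, G t > (b * q) ^ (-(1 / (q - 1))) :=
  trapping_above_general hIconn.isPreconnected h0I (mul_pos hb (zero_lt_one.trans hq)) hq.ne' hGcont
    hfG ha hG0

end
end

section
/- Let n be an integer with 1 ≤ n ≤ 6 and κ = 1/2. Let u, v : ℝ × ℝⁿ → ℂ be smooth, with u(t,·) and v(t,·) Schwartz functions for each t (with all time derivatives Schwartz, locally uniformly in t), satisfying the Schrödinger system i∂ₜu + Δu = −2 v ū and i∂ₜv + (1/2)Δv = −u² pointwise. Then the variance V(t) = ∫|x|²(|u(t,x)|² + 2|v(t,x)|²)dx is twice differentiable in t and V''(t) = 2n E(u(0,·),v(0,·)) + 2(4−n) K(u(t,·),v(t,·)) for all t. -/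
open MeasureTheory Real
open scoped RealInnerProductSpace

noncomputable section

/-- The (classical) Laplacian of a complex-valued function, as the sum of the
second partial derivatives in the coordinate directions. -/
def lapC {n : ℕ} (f : Rn n → ℂ) (x : Rn n) : ℂ :=
  ∑ i : Fin n, fderiv ℝ (fun y => fderiv ℝ f y (EuclideanSpace.single i 1)) x
    (EuclideanSpace.single i 1)

/-- `u(t,·)` is Schwartz for each `t`, together with all its time derivatives,
locally uniformly in `t`. -/
def SchwartzLike {n : ℕ} (u : ℝ → Rn n → ℂ) : Prop :=
  ∀ (j k m : ℕ) (T : ℝ), ∃ C : ℝ, ∀ t : ℝ, |t| ≤ T → ∀ x : Rn n,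
    ‖x‖ ^ k * ‖iteratedFDeriv ℝ m (fun y => iteratedDeriv j (fun s => u s y) t) x‖ ≤ C

/-- Partial derivative of a real-valued function. -/
def pdR {n : ℕ} (i : Fin n) (φ : Rn n → ℝ) (x : Rn n) : ℝ :=
  fderiv ℝ φ x (EuclideanSpace.single i 1)

/-- Second partial derivative `∂²φ/∂x_k∂x_j` of a real-valued function. -/
def d2R {n : ℕ} (j k : Fin n) (φ : Rn n → ℝ) (x : Rn n) : ℝ :=
  fderiv ℝ (fun y => fderiv ℝ φ y (EuclideanSpace.single j 1)) x
    (EuclideanSpace.single k 1)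

/-- The (classical) Laplacian of a real-valued function. -/
def lapR {n : ℕ} (φ : Rn n → ℝ) (x : Rn n) : ℝ := ∑ i, d2R i i φ x

/-!
On Schwartz functions let `⟪f, g⟫ = Re ∫ f ḡ`. The system is Hamiltonian: `∂ₜu = i G₁` and
`∂ₜv = i G₂`, where `G₁ = Δu + 2vū` and `G₂ = (1/2)Δv + u²` are the components of `-1/2` times the
`L²` gradient of the energy, so that `E' = -2⟪G₁, i G₁⟫ - 2⟪G₂, i G₂⟫ = 0`. In `V'` the nonlinear
terms cancel, because those of the system preserve `|u|² + 2|v|²` pointwise, and integration by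
parts leaves `V' = -4 (⟪i x·∇u, u⟫ + ⟪i x·∇v, v⟫)`. As `x·∇ + n/2` is skew-adjoint, differentiating
once more gives `V'' = -4 (⟪G₁, (2 x·∇ + n) u⟫ + ⟪G₂, (2 x·∇ + n) v⟫)`. The linear part of the
bracket is `-2K`, since `[Δ, x·∇] = 2Δ`, and the nonlinear part is `n Re ∫ v̄ u²` by the Leibniz
rule for `x·∇`. Hence `V'' = 8K - 4n Re ∫ v̄ u² = 2n E + 2(4 - n) K`.
-/

section VirialIdentity

open SchwartzMap LineDeriv Laplacian Module Filter
open scoped Topology ENNReal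

section RadialDerivative

variable {E F : Type*} [NormedAddCommGroup E] [NormedSpace ℝ E]
  [NormedAddCommGroup F] [NormedSpace ℝ F]

/-- The radial derivative `x · ∇f` of a Schwartz function, the generator of dilations. -/
def radialDeriv : 𝓢(E, F) →L[ℝ] 𝓢(E, F) :=
  bilinLeftCLM (ContinuousLinearMap.id ℝ (E →L[ℝ] F)) (g := id) (by fun_prop) ∘L fderivCLM ℝ E F

lemma radialDeriv_apply (f : 𝓢(E, F)) (x : E) : radialDeriv f x = fderiv ℝ f x x := rfl

lemma lineDerivOp_radialDeriv (v : E) (f : 𝓢(E, F)) :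
    ∂_{v} (radialDeriv f) = radialDeriv (∂_{v} f) + ∂_{v} f := by
  ext x
  have hf' : HasFDerivAt (fderiv ℝ f) (fderiv ℝ (fderiv ℝ f) x) x :=
    (fderivCLM ℝ E F f).hasFDerivAt x
  have hsymm := (f.contDiffAt (x := x) (n := 2)).isSymmSndFDerivAt (by simp) v x
  have hradial : (∂_{v} (radialDeriv f)) x = fderiv ℝ f x v + fderiv ℝ (fderiv ℝ f) x v x := by
    simpa using! DFunLike.congr_fun (hf'.clm_apply (hasFDerivAt_id x)).fderiv v
  have hline : radialDeriv (∂_{v} f) x = fderiv ℝ (fderiv ℝ f) x x v := by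
    simpa using! DFunLike.congr_fun (hf'.clm_apply (hasFDerivAt_const v x)).fderiv x
  rw [add_apply, hradial, hline, lineDerivOp_apply_eq_fderiv, hsymm, add_comm]

lemma lineDerivOp_smulLeftCLM_apply {g : E → ℝ} (hg : g.HasTemperateGrowth) (v : E) (f : 𝓢(E, F))
    (x : E) :
    (∂_{v} (smulLeftCLM F g f)) x = fderiv ℝ g x v • f x + g x • (∂_{v} f) x := by
  have hgx : DifferentiableAt ℝ g x := hg.1.contDiffAt.differentiableAt (by simp)
  rw [lineDerivOp_apply_eq_fderiv, smulLeftCLM_apply hg,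
    fderiv_fun_smul hgx f.differentiableAt, lineDerivOp_apply_eq_fderiv]
  simp [add_comm]

end RadialDerivative

section InnerProductDomain

variable {E F : Type*} [NormedAddCommGroup E] [InnerProductSpace ℝ E]
  [NormedAddCommGroup F] [NormedSpace ℝ F]

lemma lineDerivOp_smulLeftCLM_inner (w v : E) (f : 𝓢(E, F)) :
    ∂_{v} (smulLeftCLM F (fun x => ⟪w, x⟫) f)
      = ⟪w, v⟫ • f + smulLeftCLM F (fun x => ⟪w, x⟫) (∂_{v} f) := by
  ext x
  have hfderiv : fderiv ℝ (fun y : E => ⟪w, y⟫) x v = ⟪w, v⟫ :=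
    DFunLike.congr_fun (innerSL ℝ w).fderiv v
  rw [lineDerivOp_smulLeftCLM_apply (by fun_prop), hfderiv, add_apply, smul_apply,
    smulLeftCLM_apply_apply (by fun_prop)]

lemma lineDerivOp_smulLeftCLM_norm_sq (v : E) (f : 𝓢(E, F)) :
    ∂_{v} (smulLeftCLM F (fun x => ‖x‖ ^ 2) f)
      = (2 : ℝ) • smulLeftCLM F (fun x => ⟪v, x⟫) f
        + smulLeftCLM F (fun x => ‖x‖ ^ 2) (∂_{v} f) := by
  ext x
  have hinner : (fun x : E => ⟪v, x⟫).HasTemperateGrowth := by fun_prop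
  rw [lineDerivOp_smulLeftCLM_apply (by fun_prop), fderiv_norm_sq_apply, add_apply,
    smulLeftCLM_apply_apply (by fun_prop)]
  simp [hinner, real_inner_comm, smul_smul]

lemma radialDeriv_eq_sum {ι : Type*} [Fintype ι] (b : OrthonormalBasis ι ℝ E) (f : 𝓢(E, F)) :
    radialDeriv f = ∑ i, smulLeftCLM F (fun x => ⟪b i, x⟫) (∂_{b i} f) := by
  ext x
  calc radialDeriv f x = fderiv ℝ f x (∑ i, ⟪b i, x⟫ • b i) := by
        rw [b.sum_repr', radialDeriv_apply]
    _ = (∑ i, smulLeftCLM F (fun x => ⟪b i, x⟫) (∂_{b i} f)) x := by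
        simp only [sum_apply, map_sum, map_smul]
        refine Finset.sum_congr rfl fun i _ => ?_
        rw [smulLeftCLM_apply_apply (by fun_prop), lineDerivOp_apply_eq_fderiv]

lemma laplacian_radialDeriv [FiniteDimensional ℝ E] (f : 𝓢(E, F)) :
    Δ (radialDeriv f) = radialDeriv (Δ f) + (2 : ℝ) • Δ f := by
  simp only [laplacian_eq_sum (stdOrthonormalBasis ℝ E), lineDerivOp_radialDeriv, lineDerivOp_add,
    Finset.sum_add_distrib, map_sum, two_smul, add_assoc]

end InnerProductDomain

section L2Inner

variable {E F : Type*} [NormedAddCommGroup E] [NormedSpace ℝ E] [SecondCountableTopology E]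
  [MeasurableSpace E] [BorelSpace E] [NormedAddCommGroup F] [InnerProductSpace ℝ F]
  (μ : Measure E) [μ.HasTemperateGrowth]

/-- The real `L²` inner product, as a bilinear form on Schwartz functions. -/
def l2Inner : LinearMap.BilinForm ℝ 𝓢(E, F) :=
  (innerₗ (Lp F 2 μ)).compl₁₂ (toLpCLM ℝ F 2 μ).toLinearMap (toLpCLM ℝ F 2 μ).toLinearMap

lemma l2Inner_eq_inner_toLp (f g : 𝓢(E, F)) : l2Inner μ f g = ⟪f.toLp 2 μ, g.toLp 2 μ⟫ := rfl

lemma l2Inner_eq_integral (f g : 𝓢(E, F)) : l2Inner μ f g = ∫ x, ⟪f x, g x⟫ ∂μ := by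
  refine integral_congr_ae ?_
  filter_upwards [f.coeFn_toLp 2 μ, g.coeFn_toLp 2 μ] with x hf hg
  simp only [toLpCLM_apply, ContinuousLinearMap.coe_coe]
  rw [hf, hg]

lemma integrable_inner_schwartz (f g : 𝓢(E, F)) : Integrable (fun x => ⟪f x, g x⟫) μ :=
  (pairing (innerSL ℝ : F →L[ℝ] F →L[ℝ] ℝ) f g).integrable

lemma l2Inner_comm (f g : 𝓢(E, F)) : l2Inner μ f g = l2Inner μ g f := by
  simp only [l2Inner_eq_inner_toLp, real_inner_comm]

lemma l2Inner_smulLeftCLM_left {g : E → ℝ} (hg : g.HasTemperateGrowth) (f h : 𝓢(E, F)) :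
    l2Inner μ (smulLeftCLM F g f) h = l2Inner μ f (smulLeftCLM F g h) := by
  simp only [l2Inner_eq_integral, smulLeftCLM_apply_apply hg, real_inner_smul_left,
    real_inner_smul_right]

end L2Inner

section IntegrationByParts

variable {E F : Type*} [NormedAddCommGroup E] [InnerProductSpace ℝ E] [FiniteDimensional ℝ E]
  [MeasurableSpace E] [BorelSpace E] [NormedAddCommGroup F] [InnerProductSpace ℝ F]
  (μ : Measure E) [μ.IsAddHaarMeasure]

lemma l2Inner_laplacian_left (f g : 𝓢(E, F)) : l2Inner μ (Δ f) g = l2Inner μ f (Δ g) := by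
  simpa only [l2Inner_eq_integral] using!
    (integral_bilinear_laplacian_right_eq_left (μ := μ) f g (innerSL ℝ : F →L[ℝ] F →L[ℝ] ℝ)).symm

lemma l2Inner_lineDerivOp_right (v : E) (f g : 𝓢(E, F)) :
    l2Inner μ f (∂_{v} g) = -l2Inner μ (∂_{v} f) g := by
  simpa only [l2Inner_eq_integral] using! integral_bilinear_lineDerivOp_right_eq_neg_left (μ := μ)
    f g (innerSL ℝ : F →L[ℝ] F →L[ℝ] ℝ) v

lemma l2Inner_laplacian_right_eq_neg_sum {ι : Type*} [Fintype ι] (b : OrthonormalBasis ι ℝ E)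
    (f g : 𝓢(E, F)) :
    l2Inner μ f (Δ g) = -∑ i, l2Inner μ (∂_{b i} f) (∂_{b i} g) := by
  simp only [laplacian_eq_sum b, map_sum, l2Inner_lineDerivOp_right, Finset.sum_neg_distrib]

lemma l2Inner_radialDeriv_left (f g : 𝓢(E, F)) :
    l2Inner μ (radialDeriv f) g = -l2Inner μ f (radialDeriv g) - finrank ℝ E * l2Inner μ f g := by
  have hterm (b : E) (hb : ‖b‖ = 1) :
      l2Inner μ (smulLeftCLM F (fun x => ⟪b, x⟫) (∂_{b} f)) g
        = -l2Inner μ f (smulLeftCLM F (fun x => ⟪b, x⟫) (∂_{b} g)) - l2Inner μ f g := by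
    rw [l2Inner_smulLeftCLM_left μ (by fun_prop), ← neg_eq_iff_eq_neg.mpr
      (l2Inner_lineDerivOp_right μ b f _), lineDerivOp_smulLeftCLM_inner,
      real_inner_self_eq_norm_sq, hb, one_pow, one_smul, map_add]
    ring
  simp only [radialDeriv_eq_sum (stdOrthonormalBasis ℝ E), map_sum, LinearMap.sum_apply,
    hterm _ ((stdOrthonormalBasis ℝ E).norm_eq_one _), Finset.sum_sub_distrib,
    Finset.sum_neg_distrib, Finset.sum_const, Finset.card_univ, Fintype.card_fin, nsmul_eq_mul]

/-- The Pohozaev identity: `[Δ, x · ∇] = 2Δ`, and `x · ∇ + n / 2` is skew-adjoint. -/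
lemma l2Inner_laplacian_two_smul_radialDeriv_add (f : 𝓢(E, F)) :
    l2Inner μ (Δ f) ((2 : ℝ) • radialDeriv f + (finrank ℝ E : ℝ) • f)
      = 2 * l2Inner μ (Δ f) f := by
  have hcomm : l2Inner μ (Δ f) (radialDeriv f)
      = l2Inner μ (radialDeriv (Δ f)) f + 2 * l2Inner μ (Δ f) f := by
    rw [l2Inner_laplacian_left, laplacian_radialDeriv, l2Inner_comm, LinearMap.map_add₂,
      LinearMap.map_smul₂, smul_eq_mul]
  have hskew := l2Inner_radialDeriv_left μ (Δ f) f
  simp only [map_add, map_smul, smul_eq_mul]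
  linarith

end IntegrationByParts

section ComplexValued

variable {E : Type*} [NormedAddCommGroup E] [NormedSpace ℝ E]

/-- The pointwise product of two complex Schwartz functions. -/
def schwartzMul (f g : 𝓢(E, ℂ)) : 𝓢(E, ℂ) := pairing (ContinuousLinearMap.mul ℝ ℂ) f g

/-- The pointwise product `f ḡ` of a complex Schwartz function with the conjugate of another. -/
def schwartzMulConj (f g : 𝓢(E, ℂ)) : 𝓢(E, ℂ) :=
  schwartzMul f (postcompCLM Complex.conjCLE.toContinuousLinearMap g)

lemma schwartzMul_apply (f g : 𝓢(E, ℂ)) (x : E) : schwartzMul f g x = f x * g x := rfl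

lemma schwartzMulConj_apply (f g : 𝓢(E, ℂ)) (x : E) :
    schwartzMulConj f g x = f x * (starRingEnd ℂ) (g x) := rfl

lemma schwartzMul_comm (f g : 𝓢(E, ℂ)) : schwartzMul f g = schwartzMul g f := by
  ext x
  simp only [schwartzMul_apply, mul_comm]

lemma schwartzMul_smul_right (c : ℂ) (f g : 𝓢(E, ℂ)) :
    schwartzMul f (c • g) = c • schwartzMul f g := by
  ext x
  simp only [schwartzMul_apply, smul_apply, smul_eq_mul, mul_left_comm]

lemma schwartzMul_smulLeftCLM_right {w : E → ℝ} (hw : w.HasTemperateGrowth) (f g : 𝓢(E, ℂ)) :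
    schwartzMul f (smulLeftCLM ℂ w g) = smulLeftCLM ℂ w (schwartzMul f g) := by
  ext x
  simp only [schwartzMul_apply, smulLeftCLM_apply_apply hw, mul_smul_comm]

lemma radialDeriv_smul (c : ℂ) (f : 𝓢(E, ℂ)) : radialDeriv (c • f) = c • radialDeriv f := by
  ext x
  simp [radialDeriv_apply, fderiv_const_smul f.differentiableAt]

lemma radialDeriv_schwartzMul (f g : 𝓢(E, ℂ)) :
    radialDeriv (schwartzMul f g)
      = schwartzMul (radialDeriv f) g + schwartzMul f (radialDeriv g) := by
  ext x
  have hfderiv := fderiv_fun_mul (f.differentiableAt (x := x)) (g.differentiableAt (x := x))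
  calc radialDeriv (schwartzMul f g) x = fderiv ℝ (fun y => f y * g y) x x := rfl
    _ = radialDeriv f x * g x + f x * radialDeriv g x := by
        simp [hfderiv, radialDeriv_apply, mul_comm, add_comm]

lemma smulLeftCLM_smul_comm {w : E → ℝ} (hw : w.HasTemperateGrowth) (c : ℂ) (f : 𝓢(E, ℂ)) :
    smulLeftCLM ℂ w (c • f) = c • smulLeftCLM ℂ w f := by
  ext x
  simp [hw, mul_left_comm]

variable [MeasurableSpace E] [BorelSpace E] (μ : Measure E) [μ.HasTemperateGrowth]

lemma toLp_schwartzMul (f g : 𝓢(E, ℂ)) :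
    (schwartzMul f g).toLp 2 μ
      = (ContinuousLinearMap.mul ℝ ℂ).holderL μ ∞ 2 2 (f.toLp ∞ μ) (g.toLp 2 μ) := by
  refine Lp.ext ?_
  filter_upwards [(schwartzMul f g).coeFn_toLp 2 μ, f.coeFn_toLp ∞ μ, g.coeFn_toLp 2 μ,
    (ContinuousLinearMap.mul ℝ ℂ).coeFn_holder (r := 2) (f.toLp ∞ μ) (g.toLp 2 μ)]
    with x hfg hf hg hholder
  rw [hf, hg] at hholder
  exact hfg.trans hholder.symm

variable [SecondCountableTopology E]

lemma l2Inner_I_smul_left (f g : 𝓢(E, ℂ)) :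
    l2Inner μ (Complex.I • f) g = -l2Inner μ f (Complex.I • g) := by
  simp only [l2Inner_eq_integral, ← integral_neg]
  congr with x
  simp only [Complex.inner, smul_apply, smul_eq_mul, map_mul, Complex.conj_I, ← Complex.neg_re]
  congr 1
  ring

lemma l2Inner_I_smul_self (f : 𝓢(E, ℂ)) : l2Inner μ (Complex.I • f) f = 0 := by
  have hskew := l2Inner_I_smul_left μ f f
  rw [l2Inner_comm μ f] at hskew
  linarith

lemma l2Inner_smulLeftCLM_I_smul_self {w : E → ℝ} (hw : w.HasTemperateGrowth) (f : 𝓢(E, ℂ)) :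
    l2Inner μ (smulLeftCLM ℂ w f) (Complex.I • f) = 0 := by
  have hskew := l2Inner_I_smul_left μ f (smulLeftCLM ℂ w f)
  rw [l2Inner_comm, ← smulLeftCLM_smul_comm hw, ← l2Inner_smulLeftCLM_left μ hw] at hskew
  linarith

lemma l2Inner_schwartzMulConj_left (f g h : 𝓢(E, ℂ)) :
    l2Inner μ (schwartzMulConj f g) h = l2Inner μ f (schwartzMul g h) := by
  simp only [l2Inner_eq_integral, schwartzMul_apply, schwartzMulConj_apply]
  congr with x
  simp only [Complex.inner, map_mul, Complex.conj_conj, mul_comm, mul_left_comm, mul_assoc]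

lemma l2Inner_smulLeftCLM_I_smul_nonlinearity {w : E → ℝ} (hw : w.HasTemperateGrowth)
    (u v : 𝓢(E, ℂ)) :
    l2Inner μ (smulLeftCLM ℂ w u) (Complex.I • schwartzMulConj v u)
      + l2Inner μ (smulLeftCLM ℂ w v) (Complex.I • schwartzMul u u) = 0 := by
  have hswap : l2Inner μ (Complex.I • schwartzMulConj v u) (smulLeftCLM ℂ w u)
      = -l2Inner μ (smulLeftCLM ℂ w v) (Complex.I • schwartzMul u u) := by
    rw [l2Inner_I_smul_left, l2Inner_schwartzMulConj_left, schwartzMul_smul_right,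
      schwartzMul_smulLeftCLM_right hw, l2Inner_smulLeftCLM_left μ hw, smulLeftCLM_smul_comm hw]
  rw [l2Inner_comm, hswap, neg_add_cancel]

lemma l2Inner_schwartzMulConj_radialDeriv (u v : 𝓢(E, ℂ)) :
    2 * l2Inner μ (schwartzMulConj v u) (radialDeriv u)
      = l2Inner μ v (radialDeriv (schwartzMul u u)) := by
  rw [l2Inner_schwartzMulConj_left, radialDeriv_schwartzMul, map_add,
    schwartzMul_comm (radialDeriv u), two_mul]

end ComplexValued

section Functionals

variable {E : Type*} [NormedAddCommGroup E] [InnerProductSpace ℝ E] [FiniteDimensional ℝ E]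

/-- The component `Δu + 2vū` of `-1/2` times the `L²` gradient of the energy, so that the first
equation of the system reads `∂ₜu = i (Δu + 2vū)`. -/
def energyGradFst (u v : 𝓢(E, ℂ)) : 𝓢(E, ℂ) := Δ u + (2 : ℝ) • schwartzMulConj v u

/-- The component `(1/2)Δv + u²` of `-1/2` times the `L²` gradient of the energy, so that the second
equation of the system reads `∂ₜv = i ((1/2)Δv + u²)`. -/
def energyGradSnd (u v : 𝓢(E, ℂ)) : 𝓢(E, ℂ) := (1 / 2 : ℝ) • Δ v + schwartzMul u u

variable [MeasurableSpace E] [BorelSpace E] (μ : Measure E) [μ.IsAddHaarMeasure]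

/-- The kinetic energy `∫ |∇u|² + (1/2)|∇v|²`, integrated by parts. -/
def kineticEnergy (u v : 𝓢(E, ℂ)) : ℝ := -l2Inner μ (Δ u) u - 1 / 2 * l2Inner μ (Δ v) v

/-- The interaction `Re ∫ v̄ u²`. -/
def interaction (u v : 𝓢(E, ℂ)) : ℝ := l2Inner μ v (schwartzMul u u)

/-- The energy `E = K - 2 Re ∫ v̄ u²`. -/
def energy (u v : 𝓢(E, ℂ)) : ℝ := kineticEnergy μ u v - 2 * interaction μ u v

/-- The variance `∫ |x|² (|u|² + 2|v|²)`. -/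
def variance (u v : 𝓢(E, ℂ)) : ℝ :=
  l2Inner μ (smulLeftCLM ℂ (fun x => ‖x‖ ^ 2) u) u
    + 2 * l2Inner μ (smulLeftCLM ℂ (fun x => ‖x‖ ^ 2) v) v

/-- The virial momentum `Re ∫ i (x · ∇f) f̄` of one component: up to the factor `-4`, its total over
the components of a solution is the velocity of the variance. -/
def virialMomentum (f : 𝓢(E, ℂ)) : ℝ := l2Inner μ (Complex.I • radialDeriv f) f

lemma l2Inner_norm_sq_smul_I_smul_laplacian (f : 𝓢(E, ℂ)) :
    l2Inner μ (smulLeftCLM ℂ (fun x => ‖x‖ ^ 2) f) (Complex.I • Δ f)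
      = -2 * l2Inner μ (Complex.I • radialDeriv f) f := by
  have hterm (b : E) :
      l2Inner μ (∂_{b} (smulLeftCLM ℂ (fun x => ‖x‖ ^ 2) f)) (∂_{b} (Complex.I • f))
        = 2 * l2Inner μ (Complex.I • smulLeftCLM ℂ (fun x => ⟪b, x⟫) (∂_{b} f)) f := by
    rw [lineDerivOp_smulLeftCLM_norm_sq, lineDerivOp_smul, LinearMap.map_add₂,
      l2Inner_smulLeftCLM_I_smul_self μ (by fun_prop), LinearMap.map_smul₂,
      l2Inner_smulLeftCLM_left μ (by fun_prop), l2Inner_comm,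
      smulLeftCLM_smul_comm (by fun_prop), add_zero, smul_eq_mul]
  let b := stdOrthonormalBasis ℝ E
  have hlap : Complex.I • Δ f = Δ (Complex.I • f) := by
    simp only [← laplacianCLM_eq ℂ, map_smul]
  rw [hlap, l2Inner_laplacian_right_eq_neg_sum μ b, radialDeriv_eq_sum b]
  simp only [hterm, Finset.smul_sum, map_sum, LinearMap.sum_apply, ← Finset.mul_sum, neg_mul]

/-- Mass resonance enters here: as `2κ = 1`, both momenta get the same weight. -/
lemma l2Inner_norm_sq_smul_I_smul_energyGrad (u v : 𝓢(E, ℂ)) :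
    l2Inner μ (smulLeftCLM ℂ (fun x => ‖x‖ ^ 2) u) (Complex.I • energyGradFst u v)
      + 2 * l2Inner μ (smulLeftCLM ℂ (fun x => ‖x‖ ^ 2) v) (Complex.I • energyGradSnd u v)
      = -2 * (virialMomentum μ u + virialMomentum μ v) := by
  have hcancel := l2Inner_smulLeftCLM_I_smul_nonlinearity μ
    (w := fun x => ‖x‖ ^ 2) (by fun_prop) u v
  simp only [energyGradFst, energyGradSnd, virialMomentum, smul_add, smul_comm Complex.I (_ : ℝ),
    map_add, map_smul, smul_eq_mul, l2Inner_norm_sq_smul_I_smul_laplacian]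
  linarith

lemma l2Inner_nonlinearity_two_smul_radialDeriv_add (u v : 𝓢(E, ℂ)) :
    l2Inner μ ((2 : ℝ) • schwartzMulConj v u) ((2 : ℝ) • radialDeriv u + (finrank ℝ E : ℝ) • u)
      + l2Inner μ (schwartzMul u u) ((2 : ℝ) • radialDeriv v + (finrank ℝ E : ℝ) • v)
      = finrank ℝ E * interaction μ u v := by
  have hleibniz := l2Inner_schwartzMulConj_radialDeriv μ u v
  have hskew := l2Inner_radialDeriv_left μ v (schwartzMul u u)
  simp only [interaction, map_add, map_smul, LinearMap.add_apply, LinearMap.smul_apply,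
    smul_eq_mul, l2Inner_comm μ (schwartzMul u u), l2Inner_schwartzMulConj_left μ v u u]
  linarith

lemma l2Inner_energyGrad_two_smul_radialDeriv_add (u v : 𝓢(E, ℂ)) :
    l2Inner μ (energyGradFst u v) ((2 : ℝ) • radialDeriv u + (finrank ℝ E : ℝ) • u)
      + l2Inner μ (energyGradSnd u v) ((2 : ℝ) • radialDeriv v + (finrank ℝ E : ℝ) • v)
      = -2 * kineticEnergy μ u v + finrank ℝ E * interaction μ u v := by
  have hnonlin := l2Inner_nonlinearity_two_smul_radialDeriv_add μ u v
  rw [energyGradFst, energyGradSnd, LinearMap.map_add₂, LinearMap.map_add₂,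
    LinearMap.map_smul₂ _ (1 / 2 : ℝ), l2Inner_laplacian_two_smul_radialDeriv_add,
    l2Inner_laplacian_two_smul_radialDeriv_add, kineticEnergy, smul_eq_mul]
  linarith

end Functionals

section TimeDerivative

lemma hasDerivAt_clm_comp {V W : Type*} [AddCommGroup V] [Module ℝ V] [TopologicalSpace V]
    [ContinuousSMul ℝ V] [AddCommGroup W] [Module ℝ W] [TopologicalSpace W] [ContinuousSMul ℝ W]
    (A : V →L[ℝ] W) {f : ℝ → V} {f' : V} {t : ℝ} (hf : HasDerivAt f f' t) :
    HasDerivAt (fun s => A (f s)) (A f') t := by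
  refine .of_isLittleOTVS ?_
  simpa [Function.comp_def] using (A.isBigOTVS_comp).trans_isLittleOTVS hf.isLittleOTVS

variable {E : Type*} [NormedAddCommGroup E] [NormedSpace ℝ E] [MeasurableSpace E] [BorelSpace E]
  (μ : Measure E) [μ.HasTemperateGrowth] {t : ℝ}

lemma hasDerivAt_toLp_schwartzMul {f g : ℝ → 𝓢(E, ℂ)} {f' g' : 𝓢(E, ℂ)} (hf : HasDerivAt f f' t)
    (hg : HasDerivAt g g' t) :
    HasDerivAt (fun s => (schwartzMul (f s) (g s)).toLp 2 μ)
      ((schwartzMul (f t) g').toLp 2 μ + (schwartzMul f' (g t)).toLp 2 μ) t := by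
  simp only [toLp_schwartzMul]
  exact ((ContinuousLinearMap.mul ℝ ℂ).holderL μ ∞ 2 2).hasDerivAt_of_bilinear
    (fun _ => hasDerivAt_clm_comp (toLpCLM ℝ ℂ ∞ μ) hf)
    (fun _ => hasDerivAt_clm_comp (toLpCLM ℝ ℂ 2 μ) hg)

variable [SecondCountableTopology E] {F : Type*} [NormedAddCommGroup F] [InnerProductSpace ℝ F]

lemma hasDerivAt_l2Inner {f g : ℝ → 𝓢(E, F)} {f' g' : 𝓢(E, F)} (hf : HasDerivAt f f' t)
    (hg : HasDerivAt g g' t) :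
    HasDerivAt (fun s => l2Inner μ (f s) (g s)) (l2Inner μ (f t) g' + l2Inner μ f' (g t)) t :=
  (hasDerivAt_clm_comp (toLpCLM ℝ F 2 μ) hf).inner ℝ (hasDerivAt_clm_comp (toLpCLM ℝ F 2 μ) hg)

lemma hasDerivAt_l2Inner_clm_self {A : 𝓢(E, F) →L[ℝ] 𝓢(E, F)}
    (hA : ∀ f g, l2Inner μ (A f) g = l2Inner μ f (A g)) {f : ℝ → 𝓢(E, F)} {f' : 𝓢(E, F)}
    (hf : HasDerivAt f f' t) :
    HasDerivAt (fun s => l2Inner μ (A (f s)) (f s)) (2 * l2Inner μ (A (f t)) f') t := by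
  convert! hasDerivAt_l2Inner μ (hasDerivAt_clm_comp A hf) hf using 1
  rw [hA f', l2Inner_comm μ f', two_mul]

end TimeDerivative

section FunctionalDerivatives

variable {E : Type*} [NormedAddCommGroup E] [InnerProductSpace ℝ E] [FiniteDimensional ℝ E]
  [MeasurableSpace E] [BorelSpace E] (μ : Measure E) [μ.IsAddHaarMeasure]
  {u v : ℝ → 𝓢(E, ℂ)} {u' v' : 𝓢(E, ℂ)} {t : ℝ}

lemma hasDerivAt_interaction (hu : HasDerivAt u u' t) (hv : HasDerivAt v v' t) :
    HasDerivAt (fun s => interaction μ (u s) (v s))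
      (2 * l2Inner μ (schwartzMulConj (v t) (u t)) u'
        + l2Inner μ (schwartzMul (u t) (u t)) v') t := by
  convert! (hasDerivAt_clm_comp (toLpCLM ℝ ℂ 2 μ) hv).inner ℝ
    (hasDerivAt_toLp_schwartzMul μ hu hu) using 1
  rw [inner_add_right, l2Inner_schwartzMulConj_left, l2Inner_comm μ _ v', two_mul]
  conv_rhs => rw [schwartzMul_comm u']
  rfl

lemma hasDerivAt_kineticEnergy (hu : HasDerivAt u u' t) (hv : HasDerivAt v v' t) :
    HasDerivAt (fun s => kineticEnergy μ (u s) (v s))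
      (-2 * l2Inner μ (Δ (u t)) u' - l2Inner μ (Δ (v t)) v') t := by
  have hΔ (f g : 𝓢(E, ℂ)) : l2Inner μ (laplacianCLM ℝ E 𝓢(E, ℂ) f) g
      = l2Inner μ f (laplacianCLM ℝ E 𝓢(E, ℂ) g) := l2Inner_laplacian_left μ f g
  convert! (hasDerivAt_l2Inner_clm_self μ hΔ hu).neg.sub
    ((hasDerivAt_l2Inner_clm_self μ hΔ hv).const_mul (1 / 2)) using 1
  simp only [laplacianCLM_eq]
  ring

lemma hasDerivAt_energy (hu : HasDerivAt u u' t) (hv : HasDerivAt v v' t) :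
    HasDerivAt (fun s => energy μ (u s) (v s))
      (-2 * (l2Inner μ (energyGradFst (u t) (v t)) u'
        + l2Inner μ (energyGradSnd (u t) (v t)) v')) t := by
  convert! (hasDerivAt_kineticEnergy μ hu hv).sub
    ((hasDerivAt_interaction μ hu hv).const_mul 2) using 1
  simp only [energyGradFst, energyGradSnd, LinearMap.map_add₂, LinearMap.map_smul₂, smul_eq_mul]
  ring

lemma hasDerivAt_variance (hu : HasDerivAt u u' t) (hv : HasDerivAt v v' t) :
    HasDerivAt (fun s => variance μ (u s) (v s))
      (2 * (l2Inner μ (smulLeftCLM ℂ (fun x => ‖x‖ ^ 2) (u t)) u'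
        + 2 * l2Inner μ (smulLeftCLM ℂ (fun x => ‖x‖ ^ 2) (v t)) v')) t := by
  have hweight := l2Inner_smulLeftCLM_left (F := ℂ) μ (g := fun x => ‖x‖ ^ 2) (by fun_prop)
  convert! (hasDerivAt_l2Inner_clm_self μ hweight hu).add
    ((hasDerivAt_l2Inner_clm_self μ hweight hv).const_mul 2) using 1
  ring

lemma hasDerivAt_virialMomentum (hu : HasDerivAt u u' t) :
    HasDerivAt (fun s => virialMomentum μ (u s))
      (-l2Inner μ (Complex.I • u') ((2 : ℝ) • radialDeriv (u t) + (finrank ℝ E : ℝ) • u t)) t := by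
  convert! hasDerivAt_l2Inner μ (hasDerivAt_clm_comp (Complex.I • radialDeriv) hu) hu using 1
  have hskew := l2Inner_radialDeriv_left μ (Complex.I • u') (u t)
  have hI := l2Inner_I_smul_left μ (radialDeriv (u t)) u'
  rw [radialDeriv_smul] at hskew
  rw [l2Inner_comm μ (radialDeriv (u t))] at hI
  simp only [_root_.smul_apply, map_add, map_smul, smul_eq_mul, hskew, hI]
  ring

end FunctionalDerivatives

section Solution

variable {E : Type*} [NormedAddCommGroup E] [InnerProductSpace ℝ E] [FiniteDimensional ℝ E]

/-- A solution of the Schrödinger system with `κ = 1/2`, as a pair of differentiable curves in the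
Schwartz space solved for the time derivatives. -/
structure IsSchwartzSolution (u v : ℝ → 𝓢(E, ℂ)) : Prop where
  hasDerivAt_fst : ∀ t, HasDerivAt u (Complex.I • energyGradFst (u t) (v t)) t
  hasDerivAt_snd : ∀ t, HasDerivAt v (Complex.I • energyGradSnd (u t) (v t)) t

namespace IsSchwartzSolution

variable [MeasurableSpace E] [BorelSpace E] (μ : Measure E) [μ.IsAddHaarMeasure]
  {u v : ℝ → 𝓢(E, ℂ)}

lemma energy_eq (h : IsSchwartzSolution u v) (s t : ℝ) :
    energy μ (u s) (v s) = energy μ (u t) (v t) := by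
  have hE (t : ℝ) : HasDerivAt (fun s => energy μ (u s) (v s)) 0 t := by
    convert! hasDerivAt_energy μ (h.hasDerivAt_fst t) (h.hasDerivAt_snd t) using 1
    simp only [l2Inner_comm μ _ (Complex.I • _), l2Inner_I_smul_self, add_zero, mul_zero]
  exact is_const_of_deriv_eq_zero (fun t => (hE t).differentiableAt) (fun t => (hE t).deriv) s t

lemma hasDerivAt_variance (h : IsSchwartzSolution u v) (t : ℝ) :
    HasDerivAt (fun s => variance μ (u s) (v s))
      (-4 * (virialMomentum μ (u t) + virialMomentum μ (v t))) t := by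
  convert! _root_.hasDerivAt_variance μ (h.hasDerivAt_fst t) (h.hasDerivAt_snd t) using 1
  rw [l2Inner_norm_sq_smul_I_smul_energyGrad]
  ring

lemma hasDerivAt_virialMomentum_add (h : IsSchwartzSolution u v) (t : ℝ) :
    HasDerivAt (fun s => virialMomentum μ (u s) + virialMomentum μ (v s))
      (-2 * kineticEnergy μ (u t) (v t) + finrank ℝ E * interaction μ (u t) (v t)) t := by
  convert! (hasDerivAt_virialMomentum μ (h.hasDerivAt_fst t)).add
    (hasDerivAt_virialMomentum μ (h.hasDerivAt_snd t)) using 1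
  simp only [smul_smul, Complex.I_mul_I, neg_smul, one_smul, LinearMap.map_neg₂, neg_neg,
    l2Inner_energyGrad_two_smul_radialDeriv_add]

lemma hasDerivAt_deriv_variance (h : IsSchwartzSolution u v) (t : ℝ) :
    HasDerivAt (fun s => -4 * (virialMomentum μ (u s) + virialMomentum μ (v s)))
      (2 * finrank ℝ E * energy μ (u 0) (v 0)
        + 2 * (4 - finrank ℝ E) * kineticEnergy μ (u t) (v t)) t := by
  convert! (h.hasDerivAt_virialMomentum_add μ t).const_mul (-4) using 1
  rw [h.energy_eq μ 0 t, energy]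
  ring

end IsSchwartzSolution

end Solution

section SchwartzCurve

variable {E F : Type*} [NormedAddCommGroup E] [NormedSpace ℝ E]
  [NormedAddCommGroup F] [NormedSpace ℝ F]

lemma norm_sub_sub_smul_le_mul_sq {f f' f'' : ℝ → F} (hf : ∀ r, HasDerivAt f (f' r) r)
    (hf' : ∀ r, HasDerivAt f' (f'' r) r) {s t C : ℝ} (hC : ∀ r ∈ Set.uIcc t s, ‖f'' r‖ ≤ C) :
    ‖f s - f t - (s - t) • f' t‖ ≤ C * |s - t| ^ 2 := by
  have hC0 : 0 ≤ C := (norm_nonneg _).trans (hC t Set.left_mem_uIcc)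
  have hderiv (r : ℝ) (hr : r ∈ Set.uIcc t s) : ‖f' r - f' t‖ ≤ C * |s - t| := by
    refine ((convex_uIcc t s).norm_image_sub_le_of_norm_hasDerivWithin_le
      (fun r _ => (hf' r).hasDerivWithinAt) hC Set.left_mem_uIcc hr).trans ?_
    gcongr
    exact Set.abs_sub_left_of_mem_uIcc hr
  have hlin (r : ℝ) : HasDerivAt (fun r => f r - r • f' t) (f' r - f' t) r := by
    simpa using! (hf r).sub ((hasDerivAt_id r).smul_const (f' t))
  calc ‖f s - f t - (s - t) • f' t‖ = ‖(f s - s • f' t) - (f t - t • f' t)‖ := by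
        congr 1
        module
    _ ≤ C * |s - t| * ‖s - t‖ := (convex_uIcc t s).norm_image_sub_le_of_norm_hasDerivWithin_le
        (fun r _ => (hlin r).hasDerivWithinAt) hderiv Set.left_mem_uIcc Set.right_mem_uIcc
    _ = C * |s - t| ^ 2 := by
        rw [Real.norm_eq_abs]
        ring

lemma hasDerivAt_of_seminorm_le_mul_sq {f : ℝ → 𝓢(E, F)} {f' : 𝓢(E, F)} {t : ℝ}
    (h : ∀ k m : ℕ, ∃ C : ℝ, ∀ᶠ s in 𝓝 t,
      SchwartzMap.seminorm ℝ k m (f s - f t - (s - t) • f') ≤ C * |s - t| ^ 2) :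
    HasDerivAt f f' t := by
  refine .of_isLittleOTVS ?_
  rw [Asymptotics.isLittleOTVS_iff_tendsto_inv_smul (by simp +contextual [sub_eq_zero]),
    Filter.prod_pure, Filter.tendsto_map'_iff, (schwartz_withSeminorms ℝ E F).tendsto_nhds]
  rintro ⟨k, m⟩ ε hε
  obtain ⟨C, hC⟩ := h k m
  have hsmall : ∀ᶠ s in 𝓝 t, C * |s - t| < ε := by
    refine ContinuousAt.eventually_lt (by fun_prop) continuousAt_const ?_
    simpa using hε
  filter_upwards [hC, hsmall] with s hs hsε
  rcases eq_or_ne s t with rfl | hst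
  · simpa using hε
  have hne : |s - t| ≠ 0 := abs_ne_zero.mpr (sub_ne_zero.mpr hst)
  calc SchwartzMap.seminorm ℝ k m ((s - t)⁻¹ • (f s - f t - (s - t) • f') - 0)
      = |s - t|⁻¹ * SchwartzMap.seminorm ℝ k m (f s - f t - (s - t) • f') := by
        rw [sub_zero, map_smul_eq_mul, norm_inv, Real.norm_eq_abs]
    _ ≤ |s - t|⁻¹ * (C * |s - t| ^ 2) := by gcongr
    _ = C * |s - t| := by rw [sq, mul_left_comm, inv_mul_cancel_left₀ hne]
    _ < ε := hsε

lemma iteratedFDeriv_schwartz_sub (m : ℕ) (f g : 𝓢(E, F)) (x : E) :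
    iteratedFDeriv ℝ m (f - g : 𝓢(E, F)) x = iteratedFDeriv ℝ m f x - iteratedFDeriv ℝ m g x :=
  iteratedFDeriv_sub_apply (f.smooth m).contDiffAt (g.smooth m).contDiffAt

lemma iteratedFDeriv_schwartz_smul (m : ℕ) (c : ℝ) (f : 𝓢(E, F)) (x : E) :
    iteratedFDeriv ℝ m (c • f : 𝓢(E, F)) x = c • iteratedFDeriv ℝ m f x :=
  iteratedFDeriv_const_smul_apply (f.smooth m).contDiffAt

lemma hasDerivAt_of_hasDerivAt_iteratedFDeriv {f f' f'' : ℝ → 𝓢(E, F)}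
    (hf : ∀ m x r, HasDerivAt (fun s => iteratedFDeriv ℝ m (f s) x) (iteratedFDeriv ℝ m (f' r) x) r)
    (hf' : ∀ m x r,
      HasDerivAt (fun s => iteratedFDeriv ℝ m (f' s) x) (iteratedFDeriv ℝ m (f'' r) x) r)
    (hbound : ∀ k m T, ∃ C, ∀ r, |r| ≤ T → SchwartzMap.seminorm ℝ k m (f'' r) ≤ C) (t : ℝ) :
    HasDerivAt f (f' t) t := by
  refine hasDerivAt_of_seminorm_le_mul_sq fun k m => ?_
  obtain ⟨C, hC⟩ := hbound k m (|t| + 1)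
  refine ⟨C, ?_⟩
  filter_upwards [Metric.closedBall_mem_nhds t one_pos] with s hs
  have hnear (r : ℝ) (hr : r ∈ Set.uIcc t s) : |r| ≤ |t| + 1 := by
    have hrt := (Set.abs_sub_left_of_mem_uIcc hr).trans (mem_closedBall_iff_norm.mp hs)
    linarith [abs_sub_abs_le_abs_sub r t]
  have hC0 : 0 ≤ C := (apply_nonneg _ _).trans (hC t (hnear t Set.left_mem_uIcc))
  refine seminorm_le_bound ℝ k m _ (by positivity) fun x => ?_
  have htaylor := norm_sub_sub_smul_le_mul_sq (s := s) (t := t)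
    (fun r => (hf m x r).const_smul (‖x‖ ^ k)) (fun r => (hf' m x r).const_smul (‖x‖ ^ k))
    fun r hr => by
      simpa [norm_smul] using (le_seminorm ℝ k m (f'' r) x).trans (hC r (hnear r hr))
  simpa only [iteratedFDeriv_schwartz_sub, iteratedFDeriv_schwartz_smul, Pi.smul_apply,
    smul_comm (s - t), ← smul_sub, norm_smul, norm_pow, norm_norm] using htaylor

end SchwartzCurve

section TimeSlices

variable {E F : Type*} [NormedAddCommGroup E] [NormedSpace ℝ E]
  [NormedAddCommGroup F] [NormedSpace ℝ F] {u : ℝ → E → F}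

lemma contDiff_slice (hu : ContDiff ℝ (⊤ : ℕ∞) fun p : ℝ × E => u p.1 p.2) (t : ℝ) :
    ContDiff ℝ (⊤ : ℕ∞) (u t) :=
  hu.comp (contDiff_prodMk_right t)

lemma contDiff_fderiv_slice (hu : ContDiff ℝ (⊤ : ℕ∞) fun p : ℝ × E => u p.1 p.2) :
    ContDiff ℝ (⊤ : ℕ∞) fun p : ℝ × E => fderiv ℝ (u p.1) p.2 :=
  ContDiff.fderiv (f := fun (p : ℝ × E) y => u p.1 y) (by fun_prop) contDiff_snd (by simp)

lemma contDiff_deriv_slice (hu : ContDiff ℝ (⊤ : ℕ∞) fun p : ℝ × E => u p.1 p.2) :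
    ContDiff ℝ (⊤ : ℕ∞) fun p : ℝ × E => deriv (fun s => u s p.2) p.1 :=
  (ContDiff.fderiv (f := fun (p : ℝ × E) s => u s p.2) (by fun_prop) contDiff_fst
    (by simp)).clm_apply contDiff_const

lemma contDiff_iteratedFDeriv_slice (hu : ContDiff ℝ (⊤ : ℕ∞) fun p : ℝ × E => u p.1 p.2) (m : ℕ) :
    ContDiff ℝ (⊤ : ℕ∞) fun p : ℝ × E => iteratedFDeriv ℝ m (u p.1) p.2 := by
  induction m with
  | zero => exact (continuousMultilinearCurryFin0 ℝ E F).symm.contDiff.comp hu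
  | succ m ih =>
    simp only [iteratedFDeriv_succ_eq_comp_left]
    exact (LinearIsometryEquiv.contDiff _).comp
      (contDiff_fderiv_slice (u := fun t => iteratedFDeriv ℝ m (u t)) ih)

lemma fderiv_slice (hu : ContDiff ℝ (⊤ : ℕ∞) fun p : ℝ × E => u p.1 p.2) (t : ℝ) (x : E) :
    fderiv ℝ (u t) x = fderiv ℝ (fun p : ℝ × E => u p.1 p.2) (t, x) ∘L .inr ℝ ℝ E :=
  HasFDerivAt.fderiv <| HasFDerivAt.comp (f := Prod.mk t) x
    (hu.differentiable (by simp) (t, x)).hasFDerivAt (hasFDerivAt_prodMk_right t x)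

lemma deriv_slice (hu : ContDiff ℝ (⊤ : ℕ∞) fun p : ℝ × E => u p.1 p.2) (t : ℝ) (x : E) :
    deriv (fun s => u s x) t = fderiv ℝ (fun p : ℝ × E => u p.1 p.2) (t, x) (1, 0) :=
  HasDerivAt.deriv <| HasFDerivAt.comp_hasDerivAt (f := fun s => (s, x)) t
    (hu.differentiable (by simp) (t, x)).hasFDerivAt
    ((hasDerivAt_id t).prodMk (hasDerivAt_const t x))

lemma hasDerivAt_fderiv_slice (hu : ContDiff ℝ (⊤ : ℕ∞) fun p : ℝ × E => u p.1 p.2) (t : ℝ)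
    (x : E) :
    HasDerivAt (fun s => fderiv ℝ (u s) x) (fderiv ℝ (fun y => deriv (fun s => u s y) t) x) t := by
  simp only [fderiv_slice hu, deriv_slice hu]
  set U : ℝ × E → F := fun p => u p.1 p.2
  have hU' : HasFDerivAt (fderiv ℝ U) (fderiv ℝ (fderiv ℝ U) (t, x)) (t, x) :=
    ((hu.fderiv_right (m := (⊤ : ℕ∞)) le_rfl).differentiable (by simp) _).hasFDerivAt
  have hspace : HasFDerivAt (fun y => fderiv ℝ U (t, y)) _ x :=
    HasFDerivAt.comp (f := Prod.mk t) x hU' (hasFDerivAt_prodMk_right t x)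
  have htime : HasDerivAt (fun s => fderiv ℝ U (s, x)) (fderiv ℝ (fderiv ℝ U) (t, x) (1, 0)) t :=
    HasFDerivAt.comp_hasDerivAt (f := fun s => (s, x)) t hU'
      ((hasDerivAt_id t).prodMk (hasDerivAt_const t x))
  have hsymm : IsSymmSndFDerivAt ℝ U (t, x) :=
    (hu.contDiffAt.of_le (WithTop.coe_le_coe.2 le_top)).isSymmSndFDerivAt (n := (2 : ℕ∞)) (by simp)
  have hmixed : fderiv ℝ (fun y => fderiv ℝ U (t, y) (1, 0)) x
      = fderiv ℝ (fderiv ℝ U) (t, x) (1, 0) ∘L .inr ℝ ℝ E := by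
    rw [(hspace.clm_apply (hasFDerivAt_const (1, 0) x)).fderiv]
    ext h
    simpa using hsymm (0, h) (1, 0)
  rw [hmixed]
  simpa using! htime.clm_comp (hasDerivAt_const t (.inr ℝ ℝ E))

lemma hasDerivAt_iteratedFDeriv_slice (hu : ContDiff ℝ (⊤ : ℕ∞) fun p : ℝ × E => u p.1 p.2)
    (m : ℕ) (x : E) (t : ℝ) :
    HasDerivAt (fun s => iteratedFDeriv ℝ m (u s) x)
      (iteratedFDeriv ℝ m (fun y => deriv (fun s => u s y) t) x) t := by
  induction m generalizing x with
  | zero =>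
    have hdiff : Differentiable ℝ fun s => u s x :=
      (hu.comp (contDiff_prodMk_left x)).differentiable (by simp)
    exact (continuousMultilinearCurryFin0 ℝ E F).symm.toContinuousLinearEquiv.hasFDerivAt
      |>.comp_hasDerivAt t (hdiff t).hasDerivAt
  | succ m ih =>
    simp only [iteratedFDeriv_succ_eq_comp_left, Function.comp_apply,
      ← funext fun y => (ih y).deriv]
    exact (continuousMultilinearCurryLeftEquiv ℝ (fun _ : Fin (m + 1) => E) F).symm
      |>.toContinuousLinearEquiv.hasFDerivAt.comp_hasDerivAt t
        (hasDerivAt_fderiv_slice (u := fun s => iteratedFDeriv ℝ m (u s))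
          (contDiff_iteratedFDeriv_slice hu m) t x)

end TimeSlices

section EuclideanFunctionals

variable {n : ℕ}

lemma lapC_eq_laplacian (f : 𝓢(Rn n, ℂ)) (x : Rn n) : lapC f x = (Δ f) x := by
  simp only [laplacian_eq_sum (EuclideanSpace.basisFun (Fin n) ℝ), sum_apply,
    EuclideanSpace.basisFun_apply]
  rfl

lemma energyGradFst_apply (u v : 𝓢(Rn n, ℂ)) (x : Rn n) :
    energyGradFst u v x = lapC u x + 2 * (v x * (starRingEnd ℂ) (u x)) := by
  rw [energyGradFst, add_apply, smul_apply, schwartzMulConj_apply, lapC_eq_laplacian,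
    Complex.real_smul, Complex.ofReal_ofNat]

lemma energyGradSnd_apply (u v : 𝓢(Rn n, ℂ)) (x : Rn n) :
    energyGradSnd u v x = 1 / 2 * lapC v x + u x ^ 2 := by
  rw [energyGradSnd, add_apply, smul_apply, schwartzMul_apply, lapC_eq_laplacian,
    Complex.real_smul, Complex.ofReal_div, Complex.ofReal_one, Complex.ofReal_ofNat, sq]

lemma gradSqC_eq_sum_inner (f : 𝓢(Rn n, ℂ)) :
    gradSqC f = fun x => ∑ i, ⟪(∂_{EuclideanSpace.basisFun (Fin n) ℝ i} f) x,
      (∂_{EuclideanSpace.basisFun (Fin n) ℝ i} f) x⟫ := by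
  funext x
  simp only [real_inner_self_eq_norm_sq, EuclideanSpace.basisFun_apply]
  rfl

lemma integrable_gradSqC (f : 𝓢(Rn n, ℂ)) : Integrable (gradSqC f) := by
  rw [gradSqC_eq_sum_inner]
  exact integrable_finsetSum _ fun i _ => integrable_inner_schwartz volume _ _

lemma integral_gradSqC (f : 𝓢(Rn n, ℂ)) : ∫ x, gradSqC f x = -l2Inner volume (Δ f) f := by
  rw [gradSqC_eq_sum_inner, integral_finsetSum _ fun i _ => integrable_inner_schwartz volume _ _,
    l2Inner_laplacian_left,
    l2Inner_laplacian_right_eq_neg_sum volume (EuclideanSpace.basisFun (Fin n) ℝ), neg_neg]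
  simp only [l2Inner_eq_integral]

lemma KC_eq_kineticEnergy (u v : 𝓢(Rn n, ℂ)) : KC (1 / 2) u v = kineticEnergy volume u v := by
  rw [KC, integral_add (integrable_gradSqC u) ((integrable_gradSqC v).const_mul _),
    integral_const_mul, integral_gradSqC, integral_gradSqC, kineticEnergy]
  ring

lemma re_integral_conj_mul_sq (u v : 𝓢(Rn n, ℂ)) :
    (∫ x, (starRingEnd ℂ) (v x) * u x ^ 2).re = interaction volume u v := by
  have hprod : (fun x => (starRingEnd ℂ) (v x) * u x ^ 2)
      = schwartzMulConj (schwartzMul u u) v := by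
    funext x
    rw [schwartzMulConj_apply, schwartzMul_apply, mul_comm, sq]
  have hint : Integrable fun x => (starRingEnd ℂ) (v x) * u x ^ 2 :=
    hprod ▸ (schwartzMulConj (schwartzMul u u) v).integrable
  rw [interaction, l2Inner_eq_integral]
  refine (Complex.reCLM.integral_comp_comm hint).symm.trans (congrArg _ (funext fun x => ?_))
  rw [Complex.reCLM_apply, Complex.inner, schwartzMul_apply, sq, mul_comm]

lemma EC_eq_energy (u v : 𝓢(Rn n, ℂ)) : EC (1 / 2) u v = energy volume u v := by
  rw [EC, KC_eq_kineticEnergy, re_integral_conj_mul_sq, energy]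

lemma integral_norm_sq_mul_eq_variance (u v : 𝓢(Rn n, ℂ)) :
    ∫ x, ‖x‖ ^ 2 * (‖u x‖ ^ 2 + 2 * ‖v x‖ ^ 2) = variance volume u v := by
  rw [variance, l2Inner_eq_integral, l2Inner_eq_integral, ← integral_const_mul, ← integral_add
    (integrable_inner_schwartz volume _ _) ((integrable_inner_schwartz volume _ _).const_mul 2)]
  congr with x
  rw [smulLeftCLM_apply_apply (by fun_prop), smulLeftCLM_apply_apply (by fun_prop),
    real_inner_smul_left, real_inner_smul_left, real_inner_self_eq_norm_sq,
    real_inner_self_eq_norm_sq]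
  ring

end EuclideanFunctionals

namespace SchwartzLike

variable {n : ℕ} {u v : ℝ → Rn n → ℂ}

/-- The curve of Schwartz functions given by the time slices of a smooth space-time function. -/
def toSchwartz (hus : SchwartzLike u) (hu : ContDiff ℝ (⊤ : ℕ∞) fun p : ℝ × Rn n => u p.1 p.2)
    (t : ℝ) : 𝓢(Rn n, ℂ) where
  toFun := u t
  smooth' := contDiff_slice hu t
  decay' k m := (hus 0 k m |t|).imp fun _ hC => by simpa only [iteratedDeriv_zero] using hC t le_rfl

lemma timeDeriv (hus : SchwartzLike u) : SchwartzLike fun t y => deriv (fun s => u s y) t :=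
  fun j k m T => by simpa only [iteratedDeriv_succ'] using hus (j + 1) k m T

lemma exists_seminorm_toSchwartz_le (hus : SchwartzLike u)
    (hu : ContDiff ℝ (⊤ : ℕ∞) fun p : ℝ × Rn n => u p.1 p.2) (k m : ℕ) (T : ℝ) :
    ∃ C, ∀ t, |t| ≤ T → SchwartzMap.seminorm ℝ k m (hus.toSchwartz hu t) ≤ C := by
  obtain ⟨C, hC⟩ := hus 0 k m T
  refine ⟨C, fun t ht => ?_⟩
  have hdecay := hC t ht
  simp only [iteratedDeriv_zero] at hdecay
  exact seminorm_le_bound ℝ k m _ (le_trans (by positivity) (hdecay 0)) hdecay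

lemma hasDerivAt_toSchwartz (hus : SchwartzLike u)
    (hu : ContDiff ℝ (⊤ : ℕ∞) fun p : ℝ × Rn n => u p.1 p.2) (t : ℝ) :
    HasDerivAt (hus.toSchwartz hu) (hus.timeDeriv.toSchwartz (contDiff_deriv_slice hu) t) t := by
  have hu' := contDiff_deriv_slice hu
  have hu'' := contDiff_deriv_slice (u := fun t y => deriv (fun s => u s y) t) hu'
  exact hasDerivAt_of_hasDerivAt_iteratedFDeriv
    (fun m x r => hasDerivAt_iteratedFDeriv_slice hu m x r)
    (fun m x r => hasDerivAt_iteratedFDeriv_slice hu' m x r)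
    (hus.timeDeriv.timeDeriv.exists_seminorm_toSchwartz_le hu'') t

lemma isSchwartzSolution (hus : SchwartzLike u) (hvs : SchwartzLike v)
    (hu : ContDiff ℝ (⊤ : ℕ∞) fun p : ℝ × Rn n => u p.1 p.2)
    (hv : ContDiff ℝ (⊤ : ℕ∞) fun p : ℝ × Rn n => v p.1 p.2)
    (heq1 : ∀ (t : ℝ) (x : Rn n),
      Complex.I * deriv (fun s => u s x) t + lapC (u t) x
        = -2 * v t x * (starRingEnd ℂ) (u t x))
    (heq2 : ∀ (t : ℝ) (x : Rn n),
      Complex.I * deriv (fun s => v s x) t + (1 / 2 : ℂ) * lapC (v t) x = -(u t x ^ 2)) :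
    IsSchwartzSolution (hus.toSchwartz hu) (hvs.toSchwartz hv) where
  hasDerivAt_fst t := by
    convert! hus.hasDerivAt_toSchwartz hu t using 1
    ext x
    rw [smul_apply, smul_eq_mul, energyGradFst_apply]
    change Complex.I * (lapC (u t) x + 2 * (v t x * (starRingEnd ℂ) (u t x)))
      = deriv (fun s => u s x) t
    linear_combination Complex.I * heq1 t x - deriv (fun s => u s x) t * Complex.I_sq
  hasDerivAt_snd t := by
    convert! hvs.hasDerivAt_toSchwartz hv t using 1
    ext x
    rw [smul_apply, smul_eq_mul, energyGradSnd_apply]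
    change Complex.I * (1 / 2 * lapC (v t) x + u t x ^ 2) = deriv (fun s => v s x) t
    linear_combination Complex.I * heq2 t x - deriv (fun s => v s x) t * Complex.I_sq

end SchwartzLike

theorem virial_identity_general {n : ℕ} (u v : ℝ → Rn n → ℂ)
    (hu : ContDiff ℝ (⊤ : ℕ∞) fun p : ℝ × Rn n => u p.1 p.2)
    (hv : ContDiff ℝ (⊤ : ℕ∞) fun p : ℝ × Rn n => v p.1 p.2)
    (hus : SchwartzLike u) (hvs : SchwartzLike v)
    (heq1 : ∀ (t : ℝ) (x : Rn n),
      Complex.I * deriv (fun s => u s x) t + lapC (u t) x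
        = -2 * v t x * (starRingEnd ℂ) (u t x))
    (heq2 : ∀ (t : ℝ) (x : Rn n),
      Complex.I * deriv (fun s => v s x) t + (1 / 2 : ℂ) * lapC (v t) x
        = -(u t x ^ 2)) :
    ∃ W : ℝ → ℝ,
      (∀ t : ℝ, HasDerivAt
        (fun s => ∫ x : Rn n, ‖x‖ ^ 2 * (‖u s x‖ ^ 2 + 2 * ‖v s x‖ ^ 2)) (W t) t) ∧
      (∀ t : ℝ, HasDerivAt W
        (2 * (n : ℝ) * EC (1 / 2) (u 0) (v 0)
          + 2 * (4 - (n : ℝ)) * KC (1 / 2) (u t) (v t)) t) := by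
  have hsol := hus.isSchwartzSolution hvs hu hv heq1 heq2
  refine ⟨fun t => -4 * (virialMomentum volume (hus.toSchwartz hu t)
    + virialMomentum volume (hvs.toSchwartz hv t)), fun t => ?_, fun t => ?_⟩
  · convert! hsol.hasDerivAt_variance volume t using 1
    exact funext fun s =>
      integral_norm_sq_mul_eq_variance (hus.toSchwartz hu s) (hvs.toSchwartz hv s)
  · convert! hsol.hasDerivAt_deriv_variance volume t using 1
    rw [finrank_euclideanSpace_fin, ← EC_eq_energy, ← KC_eq_kineticEnergy]
    rfl

end VirialIdentity

/-- Virial identity (κ = 1/2, mass resonance): the variance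
`V(t) = ∫|x|²(|u|² + 2|v|²)` is twice differentiable with
`V''(t) = 2n E(u(0),v(0)) + 2(4−n) K(u(t),v(t))`. -/
theorem virial_identity {n : ℕ} (hn1 : 1 ≤ n) (hn6 : n ≤ 6)
    (u v : ℝ → Rn n → ℂ)
    (hu : ContDiff ℝ (⊤ : ℕ∞) fun p : ℝ × Rn n => u p.1 p.2)
    (hv : ContDiff ℝ (⊤ : ℕ∞) fun p : ℝ × Rn n => v p.1 p.2)
    (hus : SchwartzLike u) (hvs : SchwartzLike v)
    (heq1 : ∀ (t : ℝ) (x : Rn n),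
      Complex.I * deriv (fun s => u s x) t + lapC (u t) x
        = -2 * v t x * (starRingEnd ℂ) (u t x))
    (heq2 : ∀ (t : ℝ) (x : Rn n),
      Complex.I * deriv (fun s => v s x) t + (1 / 2 : ℂ) * lapC (v t) x
        = -(u t x ^ 2)) :
    ∃ W : ℝ → ℝ,
      (∀ t : ℝ, HasDerivAt
        (fun s => ∫ x : Rn n, ‖x‖ ^ 2 * (‖u s x‖ ^ 2 + 2 * ‖v s x‖ ^ 2)) (W t) t) ∧
      (∀ t : ℝ, HasDerivAt W
        (2 * (n : ℝ) * EC (1 / 2) (u 0) (v 0)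
          + 2 * (4 - (n : ℝ)) * KC (1 / 2) (u t) (v t)) t) := by
  exact virial_identity_general u v hu hv hus hvs heq1 heq2

end
end
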